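/- Let n ≥ 3 and let λ be a partition of n. Then Σ_{π ∈ C_λ} occ₍₃₂₁₎(π) = |C_λ| · ( (n−2)/6 − (n−3)·X₁/(n(n−1)) + X₂/(n(n−1)) − (n−3)·X₃/(n(n−1)) + X₄/(n(n−1)) ), where occ₍₃₂₁₎(π) = #{i : 1 ≤ i ≤ n−2, π(i) > π(i+1) > π(i+2)} is the number of occurrences of the consecutive (vincular) pattern (321) in π. -/

import Mathlib

open Equiv Finset

/-- The conjugacy class of permutations of `Fin n` with cycle type `lam`
(cycle type includes fixed points as parts of size 1, via `Equiv.Perm.partition`). -/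
def conjClass (n : ℕ) (lam : n.Partition) : Finset (Equiv.Perm (Fin n)) :=
  Finset.univ.filter fun π => (Equiv.Perm.partition π).parts = lam.parts


def cod (i t : ℕ) : Fin 5 := if t < i then 0 else if t = i then 1 else if t = i+1 then 2 else if t = i+2 then 3 else 4

theorem fin_check : ∀ a b c : Fin 5, ∀ u v w : Bool,
  (a = b → a = 0 ∨ a = 4) → (a = c → a = 0 ∨ a = 4) → (b = c → b = 0 ∨ b = 4) →
  ((u = true → w = true → v = true)) → ((v = true → w = false → u = true)) →
  (if (b < a ∨ (b = a ∧ u = false)) ∧ (c < b ∨ (c = b ∧ w = false)) then (1:ℤ) else 0)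
  + (if ((![0,2,1,3,4] : Fin 5 → Fin 5) a < ((![0,2,1,3,4] : Fin 5 → Fin 5) : Fin 5 → Fin 5) b ∨ (a = b ∧ u = true)) ∧ ((![0,2,1,3,4] : Fin 5 → Fin 5) c < ((![0,2,1,3,4] : Fin 5 → Fin 5) : Fin 5 → Fin 5) a ∨ (c = a ∧ v = false)) then (1:ℤ) else 0)
  + (if ((![0,1,3,2,4] : Fin 5 → Fin 5) c < ((![0,1,3,2,4] : Fin 5 → Fin 5) : Fin 5 → Fin 5) a ∨ (c = a ∧ v = false)) ∧ ((![0,1,3,2,4] : Fin 5 → Fin 5) b < ((![0,1,3,2,4] : Fin 5 → Fin 5) : Fin 5 → Fin 5) c ∨ (b = c ∧ w = true)) then (1:ℤ) else 0)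
  + (if ((![0,3,2,1,4] : Fin 5 → Fin 5) b < ((![0,3,2,1,4] : Fin 5 → Fin 5) : Fin 5 → Fin 5) c ∨ (b = c ∧ w = true)) ∧ ((![0,3,2,1,4] : Fin 5 → Fin 5) a < ((![0,3,2,1,4] : Fin 5 → Fin 5) : Fin 5 → Fin 5) b ∨ (a = b ∧ u = true)) then (1:ℤ) else 0)
  + (if ((![0,2,3,1,4] : Fin 5 → Fin 5) a < ((![0,2,3,1,4] : Fin 5 → Fin 5) : Fin 5 → Fin 5) c ∨ (a = c ∧ v = true)) ∧ ((![0,2,3,1,4] : Fin 5 → Fin 5) b < ((![0,2,3,1,4] : Fin 5 → Fin 5) : Fin 5 → Fin 5) a ∨ (b = a ∧ u = false)) then (1:ℤ) else 0)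
  + (if ((![0,3,1,2,4] : Fin 5 → Fin 5) c < ((![0,3,1,2,4] : Fin 5 → Fin 5) : Fin 5 → Fin 5) b ∨ (c = b ∧ w = false)) ∧ ((![0,3,1,2,4] : Fin 5 → Fin 5) a < ((![0,3,1,2,4] : Fin 5 → Fin 5) : Fin 5 → Fin 5) c ∨ (a = c ∧ v = true)) then (1:ℤ) else 0)
  = 1 - (if a = 1 ∧ b = 2 then 1 else 0) - (if a = 1 ∧ c = 3 then 1 else 0)
     - (if b = 2 ∧ c = 3 then 1 else 0)
     + (if a = 2 ∧ b = 1 then 1 else 0) + (if a = 3 ∧ c = 1 then 1 else 0)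
     + (if b = 3 ∧ c = 2 then 1 else 0)
     + 2 * (if a = 1 ∧ b = 2 ∧ c = 3 then 1 else 0)
     - (if a = 2 ∧ b = 3 ∧ c = 1 then 1 else 0)
     - (if a = 3 ∧ b = 1 ∧ c = 2 then 1 else 0) := by
  decide +kernel

set_option maxHeartbeats 1000000 in
theorem pw (i x y z : ℕ) (hxy : x ≠ y) (hxz : x ≠ z) (hyz : y ≠ z)
  (f g h k l : ℕ → ℕ)
  (hf : ∀ t, f t = if t = i then i+1 else if t = i+1 then i else t)
  (hg : ∀ t, g t = if t = i+1 then i+2 else if t = i+2 then i+1 else t)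
  (hh : ∀ t, h t = if t = i then i+2 else if t = i+2 then i else t)
  (hk : ∀ t, k t = if t = i then i+1 else if t = i+1 then i+2 else if t = i+2 then i else t)
  (hl : ∀ t, l t = if t = i then i+2 else if t = i+1 then i else if t = i+2 then i+1 else t) :
  (if y < x ∧ z < y then (1:ℤ) else 0) + (if f x < f y ∧ f z < f x then 1 else 0)
   + (if g z < g x ∧ g y < g z then 1 else 0) + (if h y < h z ∧ h x < h y then 1 else 0)
   + (if k x < k z ∧ k y < k x then 1 else 0) + (if l z < l y ∧ l x < l z then 1 else 0)
  = 1 - (if x = i ∧ y = i+1 then 1 else 0) - (if x = i ∧ z = i+2 then 1 else 0)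
     - (if y = i+1 ∧ z = i+2 then 1 else 0)
     + (if x = i+1 ∧ y = i then 1 else 0) + (if x = i+2 ∧ z = i then 1 else 0)
     + (if y = i+2 ∧ z = i+1 then 1 else 0)
     + 2 * (if x = i ∧ y = i+1 ∧ z = i+2 then 1 else 0)
     - (if x = i+1 ∧ y = i+2 ∧ z = i then 1 else 0)
     - (if x = i+2 ∧ y = i ∧ z = i+1 then 1 else 0) := by
  have N : ∀ t, cod i t = 0 ∧ t < i ∨ cod i t = 1 ∧ t = i ∨ cod i t = 2 ∧ t = i+1 ∨ cod i t = 3 ∧ t = i+2 ∨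
      cod i t = 4 ∧ i + 2 < t := by
    intro t
    unfold cod
    split_ifs <;> simp <;> omega
  have E1 : ∀ t, cod i t = 1 ↔ t = i := by
    intro t
    rcases N t with ⟨h, _⟩ | ⟨h, _⟩ | ⟨h, _⟩ | ⟨h, _⟩ | ⟨h, _⟩ <;> simp [h] <;> omega
  have E2 : ∀ t, cod i t = 2 ↔ t = i+1 := by
    intro t
    rcases N t with ⟨h, _⟩ | ⟨h, _⟩ | ⟨h, _⟩ | ⟨h, _⟩ | ⟨h, _⟩ <;> simp [h] <;> omega
  have E3 : ∀ t, cod i t = 3 ↔ t = i+2 := by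
    intro t
    rcases N t with ⟨h, _⟩ | ⟨h, _⟩ | ⟨h, _⟩ | ⟨h, _⟩ | ⟨h, _⟩ <;> simp [h] <;> omega
  have D : ∀ s t, s ≠ t → cod i s = cod i t → cod i s = 0 ∨ cod i s = 4 := by
    intro s t hst
    rcases N s with ⟨h, _⟩ | ⟨h, _⟩ | ⟨h, _⟩ | ⟨h, _⟩ | ⟨h, _⟩ <;>
    rcases N t with ⟨h', _⟩ | ⟨h', _⟩ | ⟨h', _⟩ | ⟨h', _⟩ | ⟨h', _⟩ <;> simp [h, h'] <;> omega
  have I0 : ∀ s t, s < t ↔ (cod i s < cod i t ∨ (cod i s = cod i t ∧ s < t)) := by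
    intro s t
    rcases N s with ⟨h, _⟩ | ⟨h, _⟩ | ⟨h, _⟩ | ⟨h, _⟩ | ⟨h, _⟩ <;>
    rcases N t with ⟨h', _⟩ | ⟨h', _⟩ | ⟨h', _⟩ | ⟨h', _⟩ | ⟨h', _⟩ <;> rw [h, h'] <;> simp <;> omega
  have I : ∀ (φ : ℕ → ℕ) (ψ : Fin 5 → Fin 5), (∀ t, cod i (φ t) = ψ (cod i t)) → Function.Injective ψ →
      (∀ t, cod i t = 0 ∨ cod i t = 4 → φ t = t) →
      ∀ s t, s ≠ t → (φ s < φ t ↔ (ψ (cod i s) < ψ (cod i t) ∨ (cod i s = cod i t ∧ s < t))) := by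
    intro φ ψ h1 h2 h3 s t hst
    rw [I0 (φ s) (φ t), h1, h1, h2.eq_iff]
    refine or_congr_right (and_congr_right fun h => ?_)
    rw [h3 s (D s t hst h), h3 t (h ▸ D s t hst h)]
  have Q : ∀ (φ : ℕ → ℕ) (ψ : Fin 5 → Fin 5), φ i = i + (ψ 1 : ℕ) - 1 → φ (i+1) = i + (ψ 2 : ℕ) - 1 → 
      φ (i+2) = i + (ψ 3 : ℕ) - 1 → (∀ t, t < i ∨ i + 2 < t → φ t = t) → Function.Injective ψ →
      ψ 0 = 0 → ψ 4 = 4 → 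
      ∀ s t, s ≠ t → (φ s < φ t ↔ (ψ (cod i s) < ψ (cod i t) ∨ (cod i s = cod i t ∧ s < t))) := by
    intro φ ψ h1 h2 h3 h4 h5 h6 h7
    refine I φ ψ ?_ h5 ?_
    · have key : ∀ w : Fin 5, w ≠ 0 → w ≠ 4 → cod i (i + (w:ℕ) - 1) = w := by
        intro w hw hw'
        fin_cases w
        · simp at hw
        · simp [cod]
        · simp [cod]
        · simp [cod]
        · simp at hw'
      have k0 : ∀ w, w ≠ 0 → ψ w ≠ 0 := by intro w hw h; apply hw; apply h5; rw [h, h6]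
      have k4 : ∀ w, w ≠ 4 → ψ w ≠ 4 := by intro w hw h; apply hw; apply h5; rw [h, h7]
      intro t
      rcases N t with ⟨h, h'⟩ | ⟨h, h'⟩ | ⟨h, h'⟩ | ⟨h, h'⟩ | ⟨h, h'⟩
      · rw [h4 t (Or.inl h'), h, h6]
      · rw [h, h', h1, key _ (k0 _ (by decide)) (k4 _ (by decide))]
      · rw [h, h', h2, key _ (k0 _ (by decide)) (k4 _ (by decide))]
      · rw [h, h', h3, key _ (k0 _ (by decide)) (k4 _ (by decide))]
      · rw [h4 t (Or.inr h'), h, h7]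
    · intro t ht
      apply h4
      rcases N t with ⟨h, h'⟩ | ⟨h, h'⟩ | ⟨h, h'⟩ | ⟨h, h'⟩ | ⟨h, h'⟩ <;> simp [h] at ht <;> omega
  have Qf := Q f ![0,2,1,3,4] (by simp [hf]) (by simp [hf]) (by simp [hf])
    (by intro t ht; rw [hf]; split_ifs <;> omega) (by decide) rfl rfl
  have Qg := Q g ![0,1,3,2,4] (by simp [hg]) (by simp [hg]) (by simp [hg])
    (by intro t ht; rw [hg]; split_ifs <;> omega) (by decide) rfl rfl
  have Qh := Q h ![0,3,2,1,4] (by simp [hh]) (by simp [hh]) (by simp [hh])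
    (by intro t ht; rw [hh]; split_ifs <;> omega) (by decide) rfl rfl
  have Qk := Q k ![0,2,3,1,4] (by simp [hk]) (by simp [hk]) (by simp [hk])
    (by intro t ht; rw [hk]; split_ifs <;> omega) (by decide) rfl rfl
  have Ql := Q l ![0,3,1,2,4] (by simp [hl]) (by simp [hl]) (by simp [hl])
    (by intro t ht; rw [hl]; split_ifs <;> omega) (by decide) rfl rfl
  have B : ∀ s t : ℕ, s ≠ t → (t < s ↔ decide (s < t) = false) := by
    intro s t h; simp; omega
  have B' : ∀ s t : ℕ, (s < t ↔ decide (s < t) = true) := by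
    intro s t; simp
  have R := fin_check (cod i x) (cod i y) (cod i z) (decide (x < y)) (decide (x < z)) (decide (y < z))
    (D x y hxy) (D x z hxz) (D y z hyz) (by simp; omega) (by simp; omega)
  simp only [← B x y hxy, ← B x z hxz, ← B y z hyz, ← B' x y, ← B' x z, ← B' y z] at R
  simp only [← Qf x y hxy, ← Qf z x hxz.symm, ← Qg z x hxz.symm, ← Qg y z hyz, ← Qh y z hyz, ← Qh x y hxy,
   ← Qk x z hxz, ← Qk y x hxy.symm, ← Ql z y hyz.symm, ← Ql x z hxz] at R
  simp only [← I0] at R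
  simp only [E1, E2, E3] at R
  exact R

theorem sum_conj (n : ℕ) (lam : n.Partition) (σ : Perm (Fin n)) (F : Perm (Fin n) → ℚ) :
    ∑ π ∈ conjClass n lam, F (σ * π * σ⁻¹) = ∑ π ∈ conjClass n lam, F π := by
  refine Finset.sum_equiv (MulAut.conj σ).toEquiv ?_ ?_
  · intro π
    simp only [conjClass, mem_filter, mem_univ, true_and]
    have : (σ * π * σ⁻¹).partition = π.partition := by
      rw [← Perm.partition_eq_of_isConj, isConj_comm, isConj_iff]
      exact ⟨σ, rfl⟩
    simp [this]
  · intro π _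
    simp

theorem avg (n : ℕ) (lam : n.Partition) {β : Type*} (S : Finset β) (G : Perm (Fin n) → β → Prop)
    [∀ π x, Decidable (G π x)] (K : ℚ)
    (hK : ∀ π ∈ conjClass n lam, (#(S.filter (G π)) : ℚ) = K) (x0 : β)
    (htr : ∀ x ∈ S, ∃ σ : Perm (Fin n), ∀ π, G (σ * π * σ⁻¹) x ↔ G π x0) :
    (#S : ℚ) * ∑ π ∈ conjClass n lam, (if G π x0 then (1:ℚ) else 0) = #(conjClass n lam) * K := by
  have h1 : ∀ x ∈ S, ∑ π ∈ conjClass n lam, (if G π x then (1:ℚ) else 0) =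
      ∑ π ∈ conjClass n lam, (if G π x0 then (1:ℚ) else 0) := by
    intro x hx
    obtain ⟨σ, hσ⟩ := htr x hx
    rw [← sum_conj n lam σ]
    simp only [hσ]
  rw [← nsmul_eq_mul, ← Finset.sum_const, ← Finset.sum_congr rfl h1, Finset.sum_comm,
    ← nsmul_eq_mul, ← Finset.sum_const]
  refine Finset.sum_congr rfl fun π hπ => ?_
  rw [← hK π hπ]
  simp

theorem trans2 {n : ℕ} (a b a' b' : Fin n) (h : a ≠ b) (h' : a' ≠ b') :
    ∃ σ : Perm (Fin n), σ a = a' ∧ σ b = b' := by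
  have := Perm.isMultiplyPretransitive (Fin n) 2
  obtain ⟨σ, hσ⟩ := MulAction.exists_smul_eq (Perm (Fin n))
    (⟨![a, b], by intro i j; fin_cases i <;> fin_cases j <;> simp [h, h.symm]⟩ : Fin 2 ↪ Fin n)
    (⟨![a', b'], by intro i j; fin_cases i <;> fin_cases j <;> simp [h', h'.symm]⟩ : Fin 2 ↪ Fin n)
  refine ⟨σ, ?_, ?_⟩
  · exact DFunLike.congr_fun hσ 0
  · exact DFunLike.congr_fun hσ 1

theorem trans3 {n : ℕ} (a b c a' b' c' : Fin n) (h : a ≠ b ∧ a ≠ c ∧ b ≠ c)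
    (h' : a' ≠ b' ∧ a' ≠ c' ∧ b' ≠ c') :
    ∃ σ : Perm (Fin n), σ a = a' ∧ σ b = b' ∧ σ c = c' := by
  have := Perm.isMultiplyPretransitive (Fin n) 3
  obtain ⟨h1, h2, h3⟩ := h
  obtain ⟨h1', h2', h3'⟩ := h'
  obtain ⟨σ, hσ⟩ := MulAction.exists_smul_eq (Perm (Fin n))
    (⟨![a, b, c], by
      intro i j; fin_cases i <;> fin_cases j <;> simp [h1, h2, h3, h1.symm, h2.symm, h3.symm]⟩ :
      Fin 3 ↪ Fin n)
    (⟨![a', b', c'], by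
      intro i j; fin_cases i <;> fin_cases j <;>
        simp [h1', h2', h3', h1'.symm, h2'.symm, h3'.symm]⟩ : Fin 3 ↪ Fin n)
  refine ⟨σ, ?_, ?_, ?_⟩
  · exact DFunLike.congr_fun hσ 0
  · exact DFunLike.congr_fun hσ 1
  · exact DFunLike.congr_fun hσ 2

def trip {α : Type*} [DecidableEq α] (F : Finset α) : Finset (α × α × α) :=
  (F ×ˢ F ×ˢ F).filter fun x => x.1 ≠ x.2.1 ∧ x.1 ≠ x.2.2 ∧ x.2.1 ≠ x.2.2

theorem card_offDiag_q {α : Type*} [DecidableEq α] (F : Finset α) :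
    (#F.offDiag : ℚ) = (#F : ℚ) * (#F - 1) := by
  rw [offDiag_card, Nat.cast_sub (Nat.le_mul_self _)]
  push_cast; ring

theorem card_trip {α : Type*} [DecidableEq α] (F : Finset α) :
    (#(trip F) : ℚ) = (#F : ℚ) * (#F - 1) * (#F - 2) := by
  have h : Set.MapsTo (fun x : α × α × α => (x.1, x.2.1)) (trip F) F.offDiag := by
    rintro ⟨a, b, c⟩ h
    simp [trip] at h ⊢
    tauto
  rw [card_eq_sum_card_fiberwise h]
  push_cast
  rw [← card_offDiag_q, ← nsmul_eq_mul, ← Finset.sum_const]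
  refine Finset.sum_congr rfl ?_
  rintro ⟨a, b⟩ hab
  simp only [mem_offDiag] at hab
  obtain ⟨ha, hb, hne⟩ := hab
  have h2 : #{x ∈ trip F | (x.1, x.2.1) = (a, b)} = #(F \ {a, b}) := by
    symm
    refine Finset.card_bij (fun c _ => (a, b, c)) ?_ ?_ ?_
    · intro c hc
      simp [trip] at hc ⊢
      refine ⟨⟨ha, hb, hc.1⟩, hne, fun h => hc.2.1 h.symm, fun h => hc.2.2 h.symm⟩
    · intro c _ d _ h
      simpa using h
    · rintro ⟨a', b', c⟩ h
      simp [trip] at h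
      obtain ⟨⟨h1, h2⟩, rfl, rfl⟩ := h
      refine ⟨c, ?_, rfl⟩
      simp
      refine ⟨h1.2.2, fun h => h2.2.1 h.symm, fun h => h2.2.2 h.symm⟩
  have hs : ({a, b} : Finset α) ⊆ F := by
    intro x hx
    simp at hx
    rcases hx with rfl | rfl <;> assumption
  rw [h2, card_sdiff_of_subset hs, Nat.cast_sub (card_le_card hs), card_pair hne]
  norm_num

theorem card_cyc {n : ℕ} (π : Perm (Fin n)) (k : ℕ) (hk : k.Prime) :
    #{a | π a ≠ a ∧ (π ^ k) a = a} = k * π.partition.parts.count k := by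
  have hk1 : k ≠ 1 := hk.one_lt.ne'
  rw [Perm.parts_partition, Multiset.count_add, Multiset.count_replicate, if_neg (Ne.symm hk1),
    add_zero, Perm.cycleType_def, Multiset.count_map]
  have hm : Set.MapsTo (fun a => π.cycleOf a)
      (({a | π a ≠ a ∧ (π ^ k) a = a} : Finset (Fin n)) : Set (Fin n))
      ((π.cycleFactorsFinset.filter fun c => k = #c.support : Finset _) : Set _) := by
    intro a ha
    simp only [coe_filter, mem_univ, true_and, Set.mem_ofPred_eq] at ha ⊢
    refine ⟨Perm.cycleOf_mem_cycleFactorsFinset_iff.2 (Perm.mem_support.2 ha.1), ?_⟩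
    have hc := π.isCycle_cycleOf ha.1
    have : Fact k.Prime := ⟨hk⟩
    rw [← hc.orderOf]
    symm
    rw [orderOf_eq_prime_iff]
    refine ⟨hc.pow_eq_one_iff.2 ⟨a, ?_, ?_⟩, hc.ne_one⟩
    · rw [Perm.cycleOf_apply_self]; exact ha.1
    · rw [Perm.cycleOf_pow_apply_self]; exact ha.2
  rw [card_eq_sum_card_fiberwise hm]
  have : ∀ c ∈ π.cycleFactorsFinset.filter (fun c => k = #c.support),
      #{a ∈ ({a | π a ≠ a ∧ (π ^ k) a = a} : Finset (Fin n)) | π.cycleOf a = c} = k := by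
    intro c hc
    rw [mem_filter] at hc
    obtain ⟨hc, hck⟩ := hc
    conv_rhs => rw [hck]
    congr 1
    ext a
    simp only [mem_filter, mem_univ, true_and]
    constructor
    · rintro ⟨⟨h1, h2⟩, rfl⟩
      rw [Perm.mem_support, Perm.cycleOf_apply_self]; exact h1
    · intro ha
      have e := Perm.cycle_is_cycleOf ha hc
      have h1 : π a ≠ a := by
        have := Perm.mem_support.1 ha
        rw [e, Perm.cycleOf_apply_self] at this
        exact this
      refine ⟨⟨h1, ?_⟩, e.symm⟩
      have hcyc := (Perm.mem_cycleFactorsFinset_iff.1 hc).1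
      have : c ^ k = 1 := by rw [hck, ← hcyc.orderOf, pow_orderOf_eq_one]
      rw [← Perm.cycleOf_pow_apply_self, ← e, this]; rfl
  rw [Finset.sum_congr rfl this, Finset.sum_const, smul_eq_mul, mul_comm]
  rfl

theorem card_fix {n : ℕ} (π : Perm (Fin n)) :
    #{a | π a = a} = π.partition.parts.count 1 := by
  rw [Perm.parts_partition, Multiset.count_add, Multiset.count_replicate, if_pos rfl,
    Multiset.count_eq_zero_of_notMem (fun h => lt_irrefl _ (Perm.one_lt_of_mem_cycleType h)),
    zero_add, ← card_compl]
  congr 1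
  ext a
  simp

section
variable (n : ℕ) (lam : n.Partition)

theorem s_ff (a b : Fin n) (hab : a ≠ b) :
    ((n : ℚ) * (n - 1)) * ∑ π ∈ conjClass n lam, (if π a = a ∧ π b = b then (1:ℚ) else 0)
      = #(conjClass n lam) * ((lam.parts.count 1 : ℚ) * (lam.parts.count 1 - 1)) := by
  have := avg n lam (univ : Finset (Fin n)).offDiag (fun π x => π x.1 = x.1 ∧ π x.2 = x.2)
    ((lam.parts.count 1 : ℚ) * (lam.parts.count 1 - 1)) ?_ (a, b) ?_
  · rw [card_offDiag_q] at this
    simpa using this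
  · intro π hπ
    simp only [conjClass, mem_filter, mem_univ, true_and] at hπ
    rw [← hπ, ← card_fix, ← card_offDiag_q]
    congr 2
    ext ⟨x, y⟩
    simp
    tauto
  · rintro ⟨x, y⟩ h
    simp at h
    obtain ⟨σ, rfl, rfl⟩ := trans2 a b x y hab h
    exact ⟨σ, fun π => by simp⟩

theorem s_sw (a b : Fin n) (hab : a ≠ b) :
    ((n : ℚ) * (n - 1)) * ∑ π ∈ conjClass n lam, (if π a = b ∧ π b = a then (1:ℚ) else 0)
      = #(conjClass n lam) * (2 * (lam.parts.count 2 : ℚ)) := by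
  have := avg n lam (univ : Finset (Fin n)).offDiag (fun π x => π x.1 = x.2 ∧ π x.2 = x.1)
    (2 * (lam.parts.count 2 : ℚ)) ?_ (a, b) ?_
  · rw [card_offDiag_q] at this
    simpa using this
  · intro π hπ
    simp only [conjClass, mem_filter, mem_univ, true_and] at hπ
    rw [← hπ]
    have h := card_cyc π 2 Nat.prime_two
    rw [show (2 : ℚ) * (π.partition.parts.count 2 : ℚ) = ((2 * π.partition.parts.count 2 : ℕ) : ℚ) by
      push_cast; rfl, ← h]
    congr 1
    symm
    refine Finset.card_bij (fun c _ => (c, π c)) ?_ ?_ ?_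
    · intro c hc
      simp [pow_succ] at hc ⊢
      exact ⟨fun h => hc.1 h.symm, hc.2⟩
    · intro c _ d _ h
      simp at h
      exact h
    · rintro ⟨x, y⟩ h
      simp at h
      obtain ⟨h1, rfl, h2⟩ := h
      exact ⟨x, by simp [pow_succ, h2]; exact fun h => h1 h.symm, rfl⟩
  · rintro ⟨x, y⟩ h
    simp at h
    obtain ⟨σ, rfl, rfl⟩ := trans2 a b x y hab h
    exact ⟨σ, fun π => by simp⟩

theorem s_id (a b c : Fin n) (hab : a ≠ b ∧ a ≠ c ∧ b ≠ c) :
    ((n : ℚ) * (n - 1) * (n - 2)) *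
      ∑ π ∈ conjClass n lam, (if π a = a ∧ π b = b ∧ π c = c then (1:ℚ) else 0)
      = #(conjClass n lam) * ((lam.parts.count 1 : ℚ) * (lam.parts.count 1 - 1) *
        (lam.parts.count 1 - 2)) := by
  have := avg n lam (trip (univ : Finset (Fin n)))
    (fun π x => π x.1 = x.1 ∧ π x.2.1 = x.2.1 ∧ π x.2.2 = x.2.2)
    ((lam.parts.count 1 : ℚ) * (lam.parts.count 1 - 1) * (lam.parts.count 1 - 2)) ?_ (a, b, c) ?_
  · rw [card_trip] at this
    simpa using this
  · intro π hπ
    simp only [conjClass, mem_filter, mem_univ, true_and] at hπ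
    rw [← hπ, ← card_fix, ← card_trip]
    congr 2
    ext ⟨x, y, z⟩
    simp [trip]
    tauto
  · rintro ⟨x, y, z⟩ h
    simp [trip] at h
    obtain ⟨σ, rfl, rfl, rfl⟩ := trans3 a b c x y z hab h
    exact ⟨σ, fun π => by simp⟩

theorem s_c3 (a b c : Fin n) (hab : a ≠ b ∧ a ≠ c ∧ b ≠ c) :
    ((n : ℚ) * (n - 1) * (n - 2)) *
      ∑ π ∈ conjClass n lam, (if π a = b ∧ π b = c ∧ π c = a then (1:ℚ) else 0)
      = #(conjClass n lam) * (3 * (lam.parts.count 3 : ℚ)) := by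
  have := avg n lam (trip (univ : Finset (Fin n)))
    (fun π x => π x.1 = x.2.1 ∧ π x.2.1 = x.2.2 ∧ π x.2.2 = x.1)
    (3 * (lam.parts.count 3 : ℚ)) ?_ (a, b, c) ?_
  · rw [card_trip] at this
    simpa using this
  · intro π hπ
    simp only [conjClass, mem_filter, mem_univ, true_and] at hπ
    rw [← hπ]
    have h := card_cyc π 3 Nat.prime_three
    rw [show (3 : ℚ) * (π.partition.parts.count 3 : ℚ) = ((3 * π.partition.parts.count 3 : ℕ) : ℚ) by
      push_cast; rfl, ← h]
    congr 1
    symm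
    refine Finset.card_bij (fun c _ => (c, π c, π (π c))) ?_ ?_ ?_
    · intro c hc
      simp [pow_succ, trip] at hc ⊢
      refine ⟨⟨fun h => hc.1 h.symm, fun h => ?_, fun h => hc.1 h.symm⟩, hc.2⟩
      have h2 := hc.2
      rw [← h] at h2
      exact hc.1 h2
    · intro c _ d _ h
      simp at h
      exact h
    · rintro ⟨x, y, z⟩ h
      simp [trip] at h
      obtain ⟨h1, rfl, rfl, h2⟩ := h
      exact ⟨x, by simp [pow_succ, h2]; exact fun h => h1.1 h.symm, rfl⟩
  · rintro ⟨x, y, z⟩ h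
    simp [trip] at h
    obtain ⟨σ, rfl, rfl, rfl⟩ := trans3 a b c x y z hab h
    exact ⟨σ, fun π => by simp⟩

end

theorem local_sum (n : ℕ) (lam : n.Partition) (a b c : Fin n) (hab : (a : ℕ) + 1 = b)
    (hbc : (b : ℕ) + 1 = c) :
    6 * ∑ π ∈ conjClass n lam, (if π b < π a ∧ π c < π b then (1:ℚ) else 0) =
    ∑ π ∈ conjClass n lam, ((1:ℚ) - (if π a = a ∧ π b = b then 1 else 0)
      - (if π a = a ∧ π c = c then 1 else 0) - (if π b = b ∧ π c = c then 1 else 0)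
      + (if π a = b ∧ π b = a then 1 else 0) + (if π a = c ∧ π c = a then 1 else 0)
      + (if π b = c ∧ π c = b then 1 else 0)
      + 2 * (if π a = a ∧ π b = b ∧ π c = c then 1 else 0)
      - (if π a = b ∧ π b = c ∧ π c = a then 1 else 0)
      - (if π a = c ∧ π c = b ∧ π b = a then 1 else 0)) := by
  set F : Perm (Fin n) → ℚ := fun π => if π b < π a ∧ π c < π b then (1:ℚ) else 0 with hF
  have h6 : 6 * ∑ π ∈ conjClass n lam, F π = ∑ π ∈ conjClass n lam,
      (F π + F (swap a b * π * (swap a b)⁻¹) + F (swap b c * π * (swap b c)⁻¹)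
       + F (swap a c * π * (swap a c)⁻¹)
       + F ((swap a b * swap b c) * π * (swap a b * swap b c)⁻¹)
       + F ((swap b c * swap a b) * π * (swap b c * swap a b)⁻¹)) := by
    simp only [Finset.sum_add_distrib, sum_conj]
    ring
  refine h6.trans (Finset.sum_congr rfl fun π _ => ?_)
  have nab : a ≠ b := by intro h; rw [h] at hab; omega
  have nbc : b ≠ c := by intro h; rw [h] at hbc; omega
  have nac : a ≠ c := by intro h; rw [h] at hab; omega
  have hb : (b : ℕ) = (a : ℕ) + 1 := hab.symm
  have hc : (c : ℕ) = (a : ℕ) + 2 := by omega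
  have key := pw (a : ℕ) (π a) (π b) (π c)
    (fun h => nab (π.injective (Fin.ext h))) (fun h => nac (π.injective (Fin.ext h)))
    (fun h => nbc (π.injective (Fin.ext h))) _ _ _ _ _ (fun _ => rfl) (fun _ => rfl)
    (fun _ => rfl) (fun _ => rfl) (fun _ => rfl)
  have e : ∀ s t : Fin n, s = t ↔ (s : ℕ) = t := fun s t => Fin.ext_iff
  have f1 : ∀ t : Fin n, ((swap a b t : Fin n) : ℕ) =
      if (t : ℕ) = a then (a : ℕ)+1 else if (t : ℕ) = a+1 then (a : ℕ) else t := by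
    intro t; rw [swap_apply_def]; simp only [e, hb]; split_ifs <;> omega
  have f2 : ∀ t : Fin n, ((swap b c t : Fin n) : ℕ) =
      if (t : ℕ) = a+1 then (a : ℕ)+2 else if (t : ℕ) = a+2 then (a : ℕ)+1 else t := by
    intro t; rw [swap_apply_def]; simp only [e, hb, hc]; split_ifs <;> omega
  have f3 : ∀ t : Fin n, ((swap a c t : Fin n) : ℕ) =
      if (t : ℕ) = a then (a : ℕ)+2 else if (t : ℕ) = a+2 then (a : ℕ) else t := by
    intro t; rw [swap_apply_def]; simp only [e, hc]; split_ifs <;> omega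
  have f4 : ∀ t : Fin n, ((swap a b (swap b c t) : Fin n) : ℕ) =
      if (t : ℕ) = a then (a : ℕ)+1 else if (t : ℕ) = a+1 then (a : ℕ)+2 else
        if (t : ℕ) = a+2 then (a : ℕ) else t := by
    intro t; rw [f1, f2]; split_ifs <;> omega
  have f5 : ∀ t : Fin n, ((swap b c (swap a b t) : Fin n) : ℕ) =
      if (t : ℕ) = a then (a : ℕ)+2 else if (t : ℕ) = a+1 then (a : ℕ) else
        if (t : ℕ) = a+2 then (a : ℕ)+1 else t := by
    intro t; rw [f2, f1]; split_ifs <;> omega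
  have key2 := congrArg (Int.cast : ℤ → ℚ) key
  push_cast at key2
  simp only [← f1, ← f2, ← f3, ← f4, ← f5] at key2
  simp only [← hb, ← hc, ← Fin.lt_def, ← e] at key2
  simp only [hF, mul_inv_rev, swap_inv, Perm.mul_apply, swap_apply_left, swap_apply_right,
    swap_apply_of_ne_of_ne nab.symm nbc, swap_apply_of_ne_of_ne nac.symm nbc.symm,
    swap_apply_of_ne_of_ne nab nac]
  rw [key2]
  simp only [and_comm (a := π b = a) (b := π c = b)]

theorem card_consec (n : ℕ) (hn : 3 ≤ n) :
    #((univ : Finset (Fin n × Fin n × Fin n)).filter fun x =>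
      (x.1 : ℕ) + 1 = (x.2.1 : ℕ) ∧ (x.2.1 : ℕ) + 1 = (x.2.2 : ℕ)) = n - 2 := by
  rw [← card_range (n - 2)]
  refine Finset.card_bij (fun x _ => (x.1 : ℕ)) ?_ ?_ ?_
  · rintro ⟨a, b, c⟩ h
    simp at h ⊢
    omega
  · rintro ⟨a, b, c⟩ h ⟨a', b', c'⟩ h' e
    simp at h h' e
    simp only [Prod.mk.injEq, Fin.ext_iff]
    omega
  · intro i hi
    simp at hi
    exact ⟨(⟨i, by omega⟩, ⟨i+1, by omega⟩, ⟨i+2, by omega⟩), by simp, rfl⟩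

theorem stmt12 (n : ℕ) (hn : 3 ≤ n) (lam : n.Partition)
    (p q r X₁ X₂ X₃ X₄ : ℚ)
    (hp : p = (lam.parts.count 1 : ℚ)) (hq : q = (lam.parts.count 2 : ℚ))
    (hr : r = (lam.parts.count 3 : ℚ))
    (hX1 : X₁ = p - 1) (hX2 : X₂ = (p - 1) * (p - 2) / 2 + q - 1)
    (hX3 : X₃ = (p - 1) * (p - 2) / 2 - q)
    (hX4 : X₄ = (p - 1) * (p - 2) * (p - 3) / 3 - p - r + 2) :
    (∑ π ∈ conjClass n lam,
      ((((Finset.univ : Finset (Fin n × Fin n × Fin n)).filter fun x =>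
          (x.1 : ℕ) + 1 = (x.2.1 : ℕ) ∧ (x.2.1 : ℕ) + 1 = (x.2.2 : ℕ) ∧ π x.2.1 < π x.1 ∧ π x.2.2 < π x.2.1).card : ℚ)))
    = ((conjClass n lam).card : ℚ) *
      (((n : ℚ) - 2) / 6 - ((n : ℚ) - 3) * X₁ / ((n : ℚ) * ((n : ℚ) - 1))
        + X₂ / ((n : ℚ) * ((n : ℚ) - 1))
        - ((n : ℚ) - 3) * X₃ / ((n : ℚ) * ((n : ℚ) - 1))
        + X₄ / ((n : ℚ) * ((n : ℚ) - 1))) := by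
  have hn' : (3 : ℚ) ≤ n := by exact_mod_cast hn
  have hn0 : (n : ℚ) ≠ 0 := by linarith
  have hn1 : (n : ℚ) - 1 ≠ 0 := by linarith
  have hn2 : (n : ℚ) - 2 ≠ 0 := by linarith
  set N : ℚ := (#(conjClass n lam) : ℚ) with hN
  have hloc : ∀ x ∈ (univ : Finset (Fin n × Fin n × Fin n)).filter (fun x =>
      (x.1 : ℕ) + 1 = (x.2.1 : ℕ) ∧ (x.2.1 : ℕ) + 1 = (x.2.2 : ℕ)),
      ∑ π ∈ conjClass n lam, (if π x.2.1 < π x.1 ∧ π x.2.2 < π x.2.1 then (1:ℚ) else 0) =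
      (N - 3 * (N * (p * (p - 1)) / (n * (n - 1))) + 3 * (N * (2 * q) / (n * (n - 1)))
        + 2 * (N * (p * (p - 1) * (p - 2)) / (n * (n - 1) * (n - 2)))
        - 2 * (N * (3 * r) / (n * (n - 1) * (n - 2)))) / 6 := by
    rintro ⟨a, b, c⟩ hx
    simp only [mem_filter, mem_univ, true_and] at hx
    obtain ⟨hab, hbc⟩ := hx
    have nab : a ≠ b := by intro h; rw [h] at hab; omega
    have nbc : b ≠ c := by intro h; rw [h] at hbc; omega
    have nac : a ≠ c := by intro h; rw [h] at hab; omega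
    have L := local_sum n lam a b c hab hbc
    have d2 : (n : ℚ) * (n - 1) ≠ 0 := mul_ne_zero hn0 hn1
    have d3 : (n : ℚ) * (n - 1) * (n - 2) ≠ 0 := mul_ne_zero d2 hn2
    simp only [Finset.sum_add_distrib, Finset.sum_sub_distrib, ← Finset.mul_sum] at L
    rw [eq_div_of_mul_eq d2 ((mul_comm _ _).trans (s_ff n lam a b nab)),
      eq_div_of_mul_eq d2 ((mul_comm _ _).trans (s_ff n lam a c nac)),
      eq_div_of_mul_eq d2 ((mul_comm _ _).trans (s_ff n lam b c nbc)),
      eq_div_of_mul_eq d2 ((mul_comm _ _).trans (s_sw n lam a b nab)),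
      eq_div_of_mul_eq d2 ((mul_comm _ _).trans (s_sw n lam a c nac)),
      eq_div_of_mul_eq d2 ((mul_comm _ _).trans (s_sw n lam b c nbc)),
      eq_div_of_mul_eq d3 ((mul_comm _ _).trans (s_id n lam a b c ⟨nab, nac, nbc⟩)),
      eq_div_of_mul_eq d3 ((mul_comm _ _).trans (s_c3 n lam a b c ⟨nab, nac, nbc⟩)),
      eq_div_of_mul_eq d3 ((mul_comm _ _).trans (s_c3 n lam a c b ⟨nac, nab, nbc.symm⟩)),
      ← hp, ← hq, ← hr, Finset.sum_const, nsmul_eq_mul, mul_one, ← hN] at L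
    simp only
    linarith
  have hcard : ∀ π : Perm (Fin n), (((univ : Finset (Fin n × Fin n × Fin n)).filter fun x =>
          (x.1 : ℕ) + 1 = (x.2.1 : ℕ) ∧ (x.2.1 : ℕ) + 1 = (x.2.2 : ℕ) ∧ π x.2.1 < π x.1 ∧ π x.2.2 < π x.2.1).card : ℚ)
      = ∑ x ∈ (univ : Finset (Fin n × Fin n × Fin n)).filter (fun x =>
      (x.1 : ℕ) + 1 = (x.2.1 : ℕ) ∧ (x.2.1 : ℕ) + 1 = (x.2.2 : ℕ)),
        (if π x.2.1 < π x.1 ∧ π x.2.2 < π x.2.1 then (1:ℚ) else 0) := by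
    intro π
    rw [Finset.sum_boole, Finset.filter_filter]
    simp only [and_assoc]
  simp only [hcard]
  rw [Finset.sum_comm, Finset.sum_congr rfl hloc, Finset.sum_const, card_consec n hn, nsmul_eq_mul,
    Nat.cast_sub (by omega), hX1, hX2, hX3, hX4]
  push_cast
  field_simp
  ring
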